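/- In the critical-execution setting (a recoverable wait-free binary consensus algorithm for the n processes, a configuration C, an integer z ≥ 1, and α ∈ 𝓔*_z(C) critical with respect to 𝓔*_z(C)), every process is poised to apply an operation to the same object in Cα. -/

import Mathlib

/-!
Every `σ ∈ 𝓔*_z` can be extended by
`p_0`, a crash of `p_{n-1}`, and sufficiently many steps of `p_{n-1}`: the step of `p_0` pays for
the crash, and after the crash recoverable wait-freedom forces `p_{n-1}` to decide.  The extension
depends only on the configuration reached, so two members of `𝓔*_z` that reach the same
configuration have a common extension with a common decision.  Hence two univalent executions with
extensions in `𝓔*_z` that reach the same configuration have the same valency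
(`valency_eq_of_run_eq`).  In particular no reachability assumption on `C` is needed.

At a critical `α`, every `α p_i` is univalent and both valencies occur: a deciding extension of `α`
starts either with some step `p_j`, or with a crash `c_i`, `i ≠ 0`; in the latter case `α c_i p_0`
and `α p_0 c_i` reach the same configuration, so `p_0` has the valency of `α c_i`.
If `p_i` and `p_j` are on opposite teams and are not poised at a common object, their next steps
commute, so `α p_i p_j` and `α p_j p_i` reach the same configuration, which is impossible.  As both
teams are nonempty, all processes are therefore poised at one object.
-/

namespace RecoverableConsensus

/-- A deterministic object type: a set of values, operations and responses together with a
transition function assigning to each (value, operation) pair a unique response and a unique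
resulting value. -/
structure DetType : Type 1 where
  Value : Type
  Op : Type
  Resp : Type
  δ : Value → Op → Resp × Value

/-- A type is readable if it has a Read operation that returns (an injective encoding of)
the current value of the object without changing it. -/
def Readable (T : DetType) : Prop :=
  ∃ (read : T.Op) (ι : T.Value → T.Resp),
    Function.Injective ι ∧ ∀ v, T.δ v read = (ι v, v)

/-- The register type over the value set `V`: the operation `none` is Read (returning the
current value without changing it) and `some v` is Write(v) (changing the value to `v`). -/
def RegisterType (V : Type) : DetType where
  Value := V
  Op := Option V
  Resp := V
  δ := fun u op =>
    match op with
    | none => (u, u)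
    | some v => (v, v)

def IsRegister (T : DetType) : Prop := ∃ V : Type, T = RegisterType V

/-- An event is either a step by a process or a crash of a process. -/
inductive Event (n : ℕ) : Type where
  | step : Fin n → Event n
  | crash : Fin n → Event n
deriving DecidableEq

/-- An algorithm for `n` processes: a collection of shared objects, each with a deterministic
type and an initial value, and for each process a deterministic state machine with an initial
state depending on the process's binary input.  Each state determines the process's next step
(`pending`: an operation applied to a designated object, or `none` for a no-op); the state
reached after a step is determined by the current state and the response received (`next`).
`output i s = some v` means that `s` is an output state of process `i` for the value `v`;
processes in output states take only no-op steps. -/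
structure Algorithm (n : ℕ) : Type 1 where
  ObjIdx : Type
  objType : ObjIdx → DetType
  objInit : (o : ObjIdx) → (objType o).Value
  PState : Fin n → Type
  init : (i : Fin n) → Bool → PState i
  pending : (i : Fin n) → PState i → Option ((o : ObjIdx) × (objType o).Op)
  next : (i : Fin n) → PState i → (o : ObjIdx) → (objType o).Resp → PState i
  output : (i : Fin n) → PState i → Option Bool
  output_noop : ∀ i s, output i s ≠ none → pending i s = none

/-- A configuration assigns a state to each process and a value to each object. -/
structure Config {n : ℕ} (A : Algorithm n) : Type where
  pstate : (i : Fin n) → A.PState i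
  oval : (o : A.ObjIdx) → (A.objType o).Value

variable {n : ℕ}

/-- The effect of one event on a configuration.  A crash of `p_i` resets `p_i` to its initial
state (for its input) and leaves all object values unchanged; a step of `p_i` applies its
pending operation (if any) to the designated object, receiving the response determined by the
type's transition function. -/
noncomputable def applyEvent (A : Algorithm n) (input : Fin n → Bool) (C : Config A) :
    Event n → Config A
  | .crash i => { C with pstate := Function.update C.pstate i (A.init i (input i)) }
  | .step i =>
    letI : DecidableEq A.ObjIdx := Classical.decEq _
    match A.pending i (C.pstate i) with
    | none => C
    | some ⟨o, op⟩ =>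
      { pstate := Function.update C.pstate i
          (A.next i (C.pstate i) o ((A.objType o).δ (C.oval o) op).1),
        oval := Function.update C.oval o ((A.objType o).δ (C.oval o) op).2 }

/-- Since the algorithm is deterministic, a finite execution from `C` is determined by its
schedule, i.e. its list of events; `run A input C σ` is the configuration `Cσ` reached by
applying the events of `σ` in order from `C`. -/
noncomputable def run (A : Algorithm n) (input : Fin n → Bool) (C : Config A) :
    List (Event n) → Config A
  | [] => C
  | e :: σ => run A input (applyEvent A input C e) σ

/-- The initial configuration: every process in its initial state, every object at its
initial value. -/
def initConfig (A : Algorithm n) (input : Fin n → Bool) : Config A :=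
  ⟨fun i => A.init i (input i), A.objInit⟩

/-- Process `i` has decided `v` in `Cσ`: at some point along the execution `σ` from `C`,
process `i` was in an output state for `v`. -/
def HasDecided (A : Algorithm n) (input : Fin n → Bool) (C : Config A)
    (σ : List (Event n)) (i : Fin n) (v : Bool) : Prop :=
  ∃ τ, τ <+: σ ∧ A.output i ((run A input C τ).pstate i) = some v

def CrashFree (σ : List (Event n)) : Prop := ∀ i : Fin n, Event.crash i ∉ σ

/-- The first `k` events of an infinite execution. -/
def initSeg (e : ℕ → Event n) (k : ℕ) : List (Event n) := (List.range k).map e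

/-- Agreement: in every execution no two processes decide different values. -/
def Agreement (A : Algorithm n) : Prop :=
  ∀ (input : Fin n → Bool) (σ : List (Event n)) (i j : Fin n) (v w : Bool),
    HasDecided A input (initConfig A input) σ i v →
    HasDecided A input (initConfig A input) σ j w → v = w

/-- Validity: every decided value is the input of some process. -/
def Validity (A : Algorithm n) : Prop :=
  ∀ (input : Fin n → Bool) (σ : List (Event n)) (i : Fin n) (v : Bool),
    HasDecided A input (initConfig A input) σ i v → ∃ j, input j = v

/-- Recoverable wait-freedom: every process, starting from its initial state, either crashes
or decides within a finite number of its own steps.  Equivalently: in every infinite execution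
in which process `i` starts at (or is reset by a crash to) its initial state, takes infinitely
many steps and crashes only finitely often, it eventually reaches an output state. -/
def RecWaitFree (A : Algorithm n) : Prop :=
  ∀ (input : Fin n → Bool) (C : Config A) (e : ℕ → Event n) (i : Fin n),
    (C.pstate i = A.init i (input i) ∨ ∃ k, e k = Event.crash i) →
    (∀ m, ∃ k, m ≤ k ∧ e k = Event.step i) →
    (∃ m, ∀ k, m ≤ k → e k ≠ Event.crash i) →
    ∃ (k : ℕ) (v : Bool), A.output i ((run A input C (initSeg e k)).pstate i) = some v

/-- A recoverable wait-free binary consensus algorithm. -/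
def SolvesRecConsensus (A : Algorithm n) : Prop :=
  Agreement A ∧ Validity A ∧ RecWaitFree A

/-- Agreement restricted to crash-free executions. -/
def AgreementCF (A : Algorithm n) : Prop :=
  ∀ (input : Fin n → Bool) (σ : List (Event n)), CrashFree σ →
    ∀ (i j : Fin n) (v w : Bool),
      HasDecided A input (initConfig A input) σ i v →
      HasDecided A input (initConfig A input) σ j w → v = w

/-- Validity restricted to crash-free executions. -/
def ValidityCF (A : Algorithm n) : Prop :=
  ∀ (input : Fin n → Bool) (σ : List (Event n)), CrashFree σ →
    ∀ (i : Fin n) (v : Bool),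
      HasDecided A input (initConfig A input) σ i v → ∃ j, input j = v

/-- Wait-freedom: in crash-free executions, every process that takes infinitely many steps
decides. -/
def WaitFree (A : Algorithm n) : Prop :=
  ∀ (input : Fin n → Bool) (e : ℕ → Event n),
    (∀ (k : ℕ) (i : Fin n), e k ≠ Event.crash i) →
    ∀ i : Fin n, (∀ m, ∃ k, m ≤ k ∧ e k = Event.step i) →
    ∃ (k : ℕ) (v : Bool),
      A.output i ((run A input (initConfig A input) (initSeg e k)).pstate i) = some v

/-- A wait-free binary consensus algorithm (for the model in which crashes are permanent,
i.e. only crash-free executions are relevant). -/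
def SolvesWFConsensus (A : Algorithm n) : Prop :=
  AgreementCF A ∧ ValidityCF A ∧ WaitFree A

/-- The number of crashes of process `i` in `σ`. -/
def crashCount (i : Fin n) (σ : List (Event n)) : ℕ :=
  (σ.filter fun e => decide (e = Event.crash i)).length

def isStepBelow (i : Fin n) : Event n → Bool
  | .step j => decide (j < i)
  | .crash _ => false

/-- The total number of steps taken by processes `p_0, …, p_{i-1}` in `σ`. -/
def stepsBelow (i : Fin n) (σ : List (Event n)) : ℕ := (σ.filter (isStepBelow i)).length

/-- The crash bound: for every process `p_i`, the number of crashes of `p_i` is at most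
`z·n` times the total number of steps of `p_0, …, p_{i-1}` (for `i = 0` this says that `p_0`
never crashes). -/
def EMem (z : ℕ) (σ : List (Event n)) : Prop :=
  ∀ i : Fin n, crashCount i σ ≤ z * n * stepsBelow i σ

/-- `𝓔_z`: executions satisfying the crash bound. -/
def ESet (n z : ℕ) : Set (List (Event n)) := { σ | EMem z σ }

/-- `𝓔*_z`: executions satisfying the crash bound in every prefix. -/
def EStarSet (n z : ℕ) : Set (List (Event n)) := { σ | ∀ τ, τ <+: σ → EMem z τ }

/-- `e` is an event by a process in `P`. -/
def eventBy (P : Set (Fin n)) : Event n → Prop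
  | .step i => i ∈ P
  | .crash i => i ∈ P

/-- The set of processes `P` is `v`-univalent in the execution `α` from `C` with respect to
the set of executions `𝒜`. -/
def VUnivalentIn (A : Algorithm n) (input : Fin n → Bool) (C : Config A)
    (𝒜 : Set (List (Event n))) (P : Set (Fin n)) (α : List (Event n)) (v : Bool) : Prop :=
  α ∈ 𝒜 ∧ ∀ β : List (Event n), (∀ e ∈ β, eventBy P e) → (α ++ β) ∈ 𝒜 →
    ∀ (i : Fin n) (w : Bool), HasDecided A input C (α ++ β) i w → w = v

/-- The set of processes `P` is bivalent in the execution `α` from `C` with respect to `𝒜`. -/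
def BivalentIn (A : Algorithm n) (input : Fin n → Bool) (C : Config A)
    (𝒜 : Set (List (Event n))) (P : Set (Fin n)) (α : List (Event n)) : Prop :=
  ∀ v : Bool, ∃ β : List (Event n), (∀ e ∈ β, eventBy P e) ∧ (α ++ β) ∈ 𝒜 ∧
    ∃ i : Fin n, HasDecided A input C (α ++ β) i v

/-- `P` is univalent in `α` with respect to `𝒜`: `v`-univalent for some `v`. -/
def UnivalentIn (A : Algorithm n) (input : Fin n → Bool) (C : Config A)
    (𝒜 : Set (List (Event n))) (P : Set (Fin n)) (α : List (Event n)) : Prop :=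
  ∃ v : Bool, VUnivalentIn A input C 𝒜 P α v

/-- `α ∈ 𝒜` is critical with respect to `𝒜`: `α` is bivalent with respect to `𝒜` and every
nonempty extension of `α` inside `𝒜` is univalent with respect to `𝒜`. -/
def Critical (A : Algorithm n) (input : Fin n → Bool) (C : Config A)
    (𝒜 : Set (List (Event n))) (α : List (Event n)) : Prop :=
  α ∈ 𝒜 ∧ BivalentIn A input C 𝒜 Set.univ α ∧
  ∀ β : List (Event n), β ≠ [] → (α ++ β) ∈ 𝒜 → UnivalentIn A input C 𝒜 Set.univ (α ++ β)

/-- Process `i` is on team `v` in `Cα` (with respect to `𝒜`): `α p_i` is `v`-univalent. -/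
def OnTeam (A : Algorithm n) (input : Fin n → Bool) (C : Config A)
    (𝒜 : Set (List (Event n))) (α : List (Event n)) (i : Fin n) (v : Bool) : Prop :=
  VUnivalentIn A input C 𝒜 Set.univ (α ++ [Event.step i]) v

/-- Process `i` is poised to apply an operation to object `O` in configuration `C`. -/
def PoisedAt (A : Algorithm n) (C : Config A) (i : Fin n) (O : A.ObjIdx) : Prop :=
  ∃ op, A.pending i (C.pstate i) = some ⟨O, op⟩

/-- `σ ∈ 𝒮(P)`: a crash-free schedule in which each process of `P` takes at most one step
and no other process takes a step. -/
def IsSched (P : Set (Fin n)) (σ : List (Event n)) : Prop :=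
  ∃ l : List (Fin n), l.Nodup ∧ (∀ j ∈ l, j ∈ P) ∧ σ = l.map Event.step

/-- The schedule `λ_k = c_k c_{k+1} ⋯ c_{n-1}`. -/
def lambdaSched (n k : ℕ) : List (Event n) :=
  ((List.finRange n).filter fun j => decide (k ≤ j.val)).map Event.crash

/-- `U_v`: the set of values of object `O` reachable from `Dα` by a schedule in `𝒮(𝒫)`
whose first process is on team `v`. -/
def USetCfg (A : Algorithm n) (input : Fin n → Bool) (D : Config A)
    (𝒜 : Set (List (Event n))) (α : List (Event n)) (O : A.ObjIdx) (v : Bool) :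
    Set (A.objType O).Value :=
  { w | ∃ (j : Fin n) (σ : List (Event n)), OnTeam A input D 𝒜 α j v ∧
        IsSched {k : Fin n | k ≠ j} σ ∧
        w = (run A input D (α ++ Event.step j :: σ)).oval O }

/-- The configuration `Dα` is `v`-hiding. -/
def VHiding (A : Algorithm n) (input : Fin n → Bool) (D : Config A)
    (𝒜 : Set (List (Event n))) (α : List (Event n)) (O : A.ObjIdx) (v : Bool) : Prop :=
  USetCfg A input D 𝒜 α O false ∩ USetCfg A input D 𝒜 α O true = ∅ ∧
  (run A input D α).oval O ∈ USetCfg A input D 𝒜 α O v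

/-- The configuration `Dα` is `n`-recording. -/
def NRecordingCfg (A : Algorithm n) (input : Fin n → Bool) (D : Config A)
    (𝒜 : Set (List (Event n))) (α : List (Event n)) (O : A.ObjIdx) : Prop :=
  USetCfg A input D 𝒜 α O false ∩ USetCfg A input D 𝒜 α O true = ∅ ∧
  ∀ v : Bool, (run A input D α).oval O ∈ USetCfg A input D 𝒜 α O v →
    ∃! j : Fin n, OnTeam A input D 𝒜 α j (!v)

/-- Apply the operations `o i` of the processes listed in `σ`, in order, to an object of type
`T`, starting from the value `u`. -/
def applyOps (T : DetType) (o : Fin n → T.Op) : T.Value → List (Fin n) → T.Value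
  | u, [] => u
  | u, i :: σ => applyOps T o (T.δ u (o i)).2 σ

/-- `U_x`: the set of values obtainable by applying the operations of the processes of a
duplicate-free schedule whose first process is on team `x` to an object with initial value
`u`. -/
def UVals (T : DetType) (o : Fin n → T.Op) (u : T.Value) (team : Fin n → Bool) (x : Bool) :
    Set T.Value :=
  { v | ∃ (i : Fin n) (σ : List (Fin n)), team i = x ∧ (i :: σ).Nodup ∧
        v = applyOps T o u (i :: σ) }

/-- A deterministic type `T` is `n`-recording. -/
def NRecording (n : ℕ) (T : DetType) : Prop :=
  ∃ (u : T.Value) (team : Fin n → Bool) (o : Fin n → T.Op),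
    (∀ x : Bool, ∃ i, team i = x) ∧
    (UVals T o u team false ∩ UVals T o u team true = ∅) ∧
    (∀ x : Bool, u ∈ UVals T o u team x → ∃! i, team i = !x)

end RecoverableConsensus

namespace RecoverableConsensus

variable {n : ℕ}

/-! ### Runs and commuting events -/

lemma run_append (A : Algorithm n) (input : Fin n → Bool) (C : Config A)
    (σ τ : List (Event n)) : run A input C (σ ++ τ) = run A input (run A input C σ) τ := by
  induction σ generalizing C with
  | nil => rfl
  | cons e σ ih => exact ih _

lemma applyEvent_step_none (A : Algorithm n) (input : Fin n → Bool) (D : Config A) (i : Fin n)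
    (h : A.pending i (D.pstate i) = none) : applyEvent A input D (.step i) = D := by
  simp only [applyEvent]
  rw [h]

lemma applyEvent_step_some (A : Algorithm n) (input : Fin n → Bool) (D : Config A) (i : Fin n)
    (o : A.ObjIdx) (op : (A.objType o).Op) (h : A.pending i (D.pstate i) = some ⟨o, op⟩) :
    applyEvent A input D (.step i) =
      { pstate := Function.update D.pstate i
          (A.next i (D.pstate i) o ((A.objType o).δ (D.oval o) op).1),
        oval := @Function.update _ _ (Classical.decEq _) D.oval o
          ((A.objType o).δ (D.oval o) op).2 } := by
  simp only [applyEvent]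
  rw [h]

lemma applyEvent_pstate_of_ne (A : Algorithm n) (input : Fin n → Bool) (D : Config A)
    {i j : Fin n} (hij : j ≠ i) :
    (applyEvent A input D (.step i)).pstate j = D.pstate j := by
  rcases h : A.pending i (D.pstate i) with _ | ⟨o, op⟩
  · rw [applyEvent_step_none A input D i h]
  · rw [applyEvent_step_some A input D i o op h]
    simp [hij]

lemma applyEvent_step_comm (A : Algorithm n) (input : Fin n → Bool) (D : Config A)
    {i j : Fin n} (hij : i ≠ j) (hO : ¬ ∃ O, PoisedAt A D i O ∧ PoisedAt A D j O) :
    applyEvent A input (applyEvent A input D (.step i)) (.step j) =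
      applyEvent A input (applyEvent A input D (.step j)) (.step i) := by
  have hj := applyEvent_pstate_of_ne A input D hij.symm
  have hi := applyEvent_pstate_of_ne A input D hij
  rcases h : A.pending i (D.pstate i) with _ | ⟨o, op⟩
  · rw [applyEvent_step_none A input D i h,
      applyEvent_step_none A input (applyEvent A input D (.step j)) i (by rw [hi, h])]
  rcases h' : A.pending j (D.pstate j) with _ | ⟨o', op'⟩
  · rw [applyEvent_step_none A input D j h',
      applyEvent_step_none A input (applyEvent A input D (.step i)) j (by rw [hj, h'])]
  letI : DecidableEq A.ObjIdx := Classical.decEq _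
  have hoo : o ≠ o' := by
    rintro rfl
    exact hO ⟨o, ⟨op, h⟩, ⟨op', h'⟩⟩
  rw [applyEvent_step_some A input (applyEvent A input D (.step i)) j o' op' (by rw [hj, h']),
    applyEvent_step_some A input (applyEvent A input D (.step j)) i o op (by rw [hi, h]),
    applyEvent_step_some A input D i o op h, applyEvent_step_some A input D j o' op' h']
  simp only [Function.update_of_ne hij, Function.update_of_ne hij.symm,
    Function.update_of_ne hoo, Function.update_of_ne hoo.symm]
  rw [Function.update_comm hij, Function.update_comm hoo]

lemma applyEvent_crash_comm (A : Algorithm n) (input : Fin n → Bool) (D : Config A)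
    {i j : Fin n} (hij : i ≠ j) :
    applyEvent A input (applyEvent A input D (.crash i)) (.step j) =
      applyEvent A input (applyEvent A input D (.step j)) (.crash i) := by
  have hj : (applyEvent A input D (.crash i)).pstate j = D.pstate j := by
    simp [applyEvent, hij.symm]
  rcases h : A.pending j (D.pstate j) with _ | ⟨o, op⟩
  · rw [applyEvent_step_none A input D j h, applyEvent_step_none A input _ j (by rw [hj, h])]
  · rw [applyEvent_step_some A input D j o op h,
      applyEvent_step_some A input _ j o op (by rw [hj, h])]
    simp only [applyEvent, Function.update_of_ne hij.symm]
    rw [Function.update_comm hij]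

/-! ### Membership in `𝓔*_z` -/

lemma estar_concat {z : ℕ} {σ : List (Event n)} {e : Event n} (hσ : σ ∈ EStarSet n z)
    (he : EMem z (σ ++ [e])) : σ ++ [e] ∈ EStarSet n z := by
  intro τ hτ
  rcases List.prefix_concat_iff.1 hτ with rfl | h
  · exact he
  · exact hσ _ h

lemma estar_of_prefix {z : ℕ} {σ τ : List (Event n)} (hσ : σ ∈ EStarSet n z) (h : τ <+: σ) :
    τ ∈ EStarSet n z := fun _ h' => hσ _ (h'.trans h)

lemma estar_step {z : ℕ} {σ : List (Event n)} (hσ : σ ∈ EStarSet n z) (i : Fin n) :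
    σ ++ [Event.step i] ∈ EStarSet n z := by
  refine estar_concat hσ fun k => ?_
  have h := hσ σ List.prefix_rfl k
  have h1 : crashCount k (σ ++ [Event.step i]) = crashCount k σ := by simp [crashCount]
  have h2 : stepsBelow k σ ≤ stepsBelow k (σ ++ [Event.step i]) := by simp [stepsBelow]
  rw [h1]
  exact h.trans (Nat.mul_le_mul_left _ h2)

lemma estar_replicate {z : ℕ} {σ : List (Event n)} (hσ : σ ∈ EStarSet n z) (i : Fin n) (k : ℕ) :
    σ ++ List.replicate k (Event.step i) ∈ EStarSet n z := by
  induction k with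
  | zero => simpa using hσ
  | succ k ih =>
    rw [List.replicate_succ', ← List.append_assoc]
    exact estar_step ih i

/-- A step of a lower-indexed process pays for a crash, because `z * n ≥ 1`. -/
lemma estar_step_crash {z : ℕ} (hz : 1 ≤ z) {σ : List (Event n)} (hσ : σ ∈ EStarSet n z)
    {a i : Fin n} (hai : a < i) :
    σ ++ [Event.step a] ++ [Event.crash i] ∈ EStarSet n z := by
  refine estar_concat (estar_step hσ a) fun k => ?_
  by_cases hk : k = i
  · subst hk
    have h := hσ σ List.prefix_rfl k
    have h1 : crashCount k (σ ++ [Event.step a] ++ [Event.crash k]) = crashCount k σ + 1 := by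
      simp [crashCount]
    have h2 : stepsBelow k (σ ++ [Event.step a] ++ [Event.crash k]) = stepsBelow k σ + 1 := by
      simp [stepsBelow, isStepBelow, hai]
    have hzn : 1 ≤ z * n := Nat.mul_pos hz a.pos
    rw [h1, h2, Nat.mul_succ]
    omega
  · have h := estar_step hσ a _ List.prefix_rfl k
    have h1 : crashCount k (σ ++ [Event.step a] ++ [Event.crash i])
        = crashCount k (σ ++ [Event.step a]) := by
      simp [crashCount, Ne.symm hk]
    have h2 : stepsBelow k (σ ++ [Event.step a] ++ [Event.crash i])
        = stepsBelow k (σ ++ [Event.step a]) := by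
      rw [stepsBelow, stepsBelow, List.filter_append (σ ++ _)]
      simp [isStepBelow]
    rw [h1, h2]
    exact h

/-- Process `p_0` never crashes in a member of `𝓔*_z`. -/
lemma pos_of_crash_mem_estar {z : ℕ} {σ : List (Event n)} {i : Fin n}
    (h : σ ++ [Event.crash i] ∈ EStarSet n z) : 0 < i.val := by
  by_contra h0
  have h1 := h _ List.prefix_rfl i
  have h2 : stepsBelow i (σ ++ [Event.crash i]) = 0 := by
    simp only [stepsBelow, List.length_eq_zero_iff, List.filter_eq_nil_iff]
    rintro (j | j) -
    · simp only [isStepBelow, decide_eq_true_eq, Fin.lt_def]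
      omega
    · simp [isStepBelow]
  rw [h2] at h1
  simp [crashCount] at h1

/-! ### Decisions and valency -/

lemma exists_decision_after_crash {A : Algorithm n} (hA : RecWaitFree A) (input : Fin n → Bool)
    (D : Config A) (i : Fin n) :
    ∃ (k : ℕ) (v : Bool), A.output i ((run A input (applyEvent A input D (.crash i))
      (List.replicate k (Event.step i))).pstate i) = some v := by
  obtain ⟨k, v, h⟩ := hA input (applyEvent A input D (.crash i)) (fun _ => Event.step i) i
    (Or.inl (by simp [applyEvent])) (fun m => ⟨m, le_rfl, rfl⟩) ⟨0, by simp⟩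
  refine ⟨k, v, ?_⟩
  have : initSeg (fun _ => Event.step i) k = List.replicate k (Event.step i) := by
    simp [initSeg]
  rwa [this] at h

lemma exists_common_decision {A : Algorithm n} (hA : RecWaitFree A) (hn : 2 ≤ n)
    {input : Fin n → Bool} {C : Config A} {z : ℕ} (hz : 1 ≤ z) {σ τ : List (Event n)}
    (hσ : σ ∈ EStarSet n z) (hτ : τ ∈ EStarSet n z)
    (h : run A input C σ = run A input C τ) :
    ∃ (β : List (Event n)) (i : Fin n) (v : Bool),
      (σ ++ β ∈ EStarSet n z ∧ HasDecided A input C (σ ++ β) i v) ∧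
      (τ ++ β ∈ EStarSet n z ∧ HasDecided A input C (τ ++ β) i v) := by
  let a : Fin n := ⟨0, by omega⟩
  let l : Fin n := ⟨n - 1, by omega⟩
  have hal : a < l := by simp only [a, l, Fin.lt_def]; omega
  obtain ⟨k, v, hk⟩ := exists_decision_after_crash hA input
    (applyEvent A input (run A input C σ) (.step a)) l
  have key : ∀ ρ ∈ EStarSet n z, run A input C ρ = run A input C σ →
      (ρ ++ ([Event.step a] ++ [Event.crash l] ++ List.replicate k (Event.step l))
          ∈ EStarSet n z ∧
        HasDecided A input C
          (ρ ++ ([Event.step a] ++ [Event.crash l] ++ List.replicate k (Event.step l))) l v) := by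
    intro ρ hρ hr
    refine ⟨?_, _, List.prefix_rfl, ?_⟩
    · have := estar_replicate (estar_step_crash hz hρ hal) l k
      simpa only [List.append_assoc] using this
    · rw [run_append, hr, run_append]
      exact hk
  exact ⟨_, l, v, key σ hσ rfl, key τ hτ h.symm⟩

lemma valency_eq_of_run_eq {A : Algorithm n} (hA : RecWaitFree A) (hn : 2 ≤ n)
    {input : Fin n → Bool} {C : Config A} {z : ℕ} (hz : 1 ≤ z)
    {σ τ σ' τ' : List (Event n)} {v w : Bool}
    (hσ : VUnivalentIn A input C (EStarSet n z) Set.univ σ v)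
    (hτ : VUnivalentIn A input C (EStarSet n z) Set.univ τ w)
    (hσ' : σ ++ σ' ∈ EStarSet n z) (hτ' : τ ++ τ' ∈ EStarSet n z)
    (h : run A input C (σ ++ σ') = run A input C (τ ++ τ')) : v = w := by
  obtain ⟨β, i, u, ⟨h1, h2⟩, h3, h4⟩ := exists_common_decision hA hn hz hσ' hτ' h
  rw [List.append_assoc] at h1 h2 h3 h4
  have univ : ∀ γ : List (Event n), ∀ e ∈ γ, eventBy Set.univ e := by
    rintro γ (j | j) - <;> trivial
  rw [← hσ.2 _ (univ _) h1 i u h2, ← hτ.2 _ (univ _) h3 i u h4]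

/-- Both teams are nonempty at a critical execution. -/
lemma exists_onTeam {A : Algorithm n} (hA : RecWaitFree A) (hn : 2 ≤ n)
    {input : Fin n → Bool} {C : Config A} {z : ℕ} (hz : 1 ≤ z) {α : List (Event n)}
    (hcrit : Critical A input C (EStarSet n z) α) (v : Bool) :
    ∃ i, OnTeam A input C (EStarSet n z) α i v := by
  obtain ⟨hα, hbiv, huni⟩ := hcrit
  have hstep (i : Fin n) : ∃ w, OnTeam A input C (EStarSet n z) α i w :=
    huni [Event.step i] (by simp) (estar_step hα i)
  have univ : ∀ γ : List (Event n), ∀ e ∈ γ, eventBy Set.univ e := by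
    rintro γ (j | j) - <;> trivial
  let a : Fin n := ⟨0, by omega⟩
  obtain ⟨β, -, hβ, i, hi⟩ := hbiv v
  rcases β with _ | ⟨e, β⟩
  · -- A decision already made in `α` fixes the valency of every extension.
    obtain ⟨w, hw⟩ := hstep a
    have hd : HasDecided A input C (α ++ [Event.step a]) i v := by
      obtain ⟨τ, hτ, h⟩ := hi
      rw [List.append_nil] at hτ
      exact ⟨τ, hτ.trans (List.prefix_append _ _), h⟩
    have := hw.2 [] (univ _) (by simpa using hw.1) i v (by simpa using hd)
    exact ⟨a, this ▸ hw⟩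
  · rw [← List.singleton_append, ← List.append_assoc] at hβ hi
    have he : α ++ [e] ∈ EStarSet n z := estar_of_prefix hβ (List.prefix_append _ _)
    obtain ⟨w, hw⟩ := huni [e] (by simp) he
    obtain rfl : v = w := hw.2 β (univ _) hβ i v hi
    rcases e with j | j
    · exact ⟨j, hw⟩
    · have hj := pos_of_crash_mem_estar he
      have haj : a < j := hj
      obtain ⟨u, hu⟩ := hstep a
      have : u = v := by
        refine valency_eq_of_run_eq hA hn hz hu hw (estar_step_crash hz hα haj)
          (estar_step he a) ?_
        simp only [run_append]
        exact (applyEvent_crash_comm A input _ haj.ne').symm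
      exact ⟨a, this ▸ hu⟩

lemma exists_common_object {A : Algorithm n} (hA : RecWaitFree A) (hn : 2 ≤ n)
    {input : Fin n → Bool} {C : Config A} {z : ℕ} (hz : 1 ≤ z) {α : List (Event n)}
    {i j : Fin n} {v w : Bool} (hvw : v ≠ w)
    (hi : OnTeam A input C (EStarSet n z) α i v) (hj : OnTeam A input C (EStarSet n z) α j w) :
    ∃ O, PoisedAt A (run A input C α) i O ∧ PoisedAt A (run A input C α) j O := by
  by_contra hO
  refine hvw ?_
  by_cases hij : i = j
  · subst hij
    exact valency_eq_of_run_eq hA hn hz hi hj (σ' := []) (τ' := [])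
      (by simpa using hi.1) (by simpa using hi.1) rfl
  · refine valency_eq_of_run_eq hA hn hz hi hj (estar_step hi.1 j) (estar_step hj.1 i) ?_
    simp only [run_append]
    exact applyEvent_step_comm A input _ hij hO

lemma poisedAt_unique {A : Algorithm n} {D : Config A} {i : Fin n} {O O' : A.ObjIdx}
    (h : PoisedAt A D i O) (h' : PoisedAt A D i O') : O = O' := by
  obtain ⟨op, h⟩ := h
  obtain ⟨op', h'⟩ := h'
  rw [h] at h'
  exact congrArg Sigma.fst (Option.some.inj h')

end RecoverableConsensus

open RecoverableConsensus in
/-- In the critical-execution setting, every process is poised to apply an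
operation to the same object in `Cα`. -/
theorem all_poised_at_same_object
    (n : ℕ) (hn : 2 ≤ n) (A : Algorithm n) (hA : SolvesRecConsensus A)
    (input : Fin n → Bool) (C : Config A) (z : ℕ) (hz : 1 ≤ z)
    (α : List (Event n)) (hα : α ∈ EStarSet n z)
    (hcrit : Critical A input C (EStarSet n z) α) :
    ∃ O : A.ObjIdx, ∀ i : Fin n, PoisedAt A (run A input C α) i O := by
  obtain ⟨a, ha⟩ := exists_onTeam hA.2.2 hn hz hcrit false
  obtain ⟨b, hb⟩ := exists_onTeam hA.2.2 hn hz hcrit true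
  obtain ⟨O, haO, hbO⟩ := exists_common_object hA.2.2 hn hz (by decide) ha hb
  refine ⟨O, fun i => ?_⟩
  obtain ⟨v, hv⟩ : ∃ v, OnTeam A input C (EStarSet n z) α i v :=
    hcrit.2.2 [Event.step i] (by simp) (estar_step hα i)
  -- Compare `p_i` with the representative of the opposite team.
  cases v
  · obtain ⟨O', hi, hb'⟩ := exists_common_object hA.2.2 hn hz (by decide) hv hb
    exact poisedAt_unique hbO hb' ▸ hi
  · obtain ⟨O', hi, ha'⟩ := exists_common_object hA.2.2 hn hz (by decide) hv ha
    exact poisedAt_unique haO ha' ▸ hi
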